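/- Let $m$ be a probability measure on $\mathbb{R}$ with CDF $F$. The condition $\int_{\mathbb{R}} |x|\,m(dx) < +\infty$ (finite first moment) is equivalent to $\int_{\mathbb{R}} F(x)(1-F(x))\,dx < +\infty$. -/

import Mathlib

open MeasureTheory Set
open scoped ENNReal

/-- The cumulative distribution function of a measure on `ℝ`. -/
noncomputable def cdfOf (m : Measure ℝ) (x : ℝ) : ℝ := (m (Iic x)).toReal

theorem key_identity (m : Measure ℝ) [IsProbabilityMeasure m] :
    (∫⁻ x, ENNReal.ofReal (cdfOf m x * (1 - cdfOf m x))) =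
      ∫⁻ p : ℝ × ℝ, ENNReal.ofReal (p.2 - p.1) ∂(m.prod m) := by
  have hS : MeasurableSet {q : ℝ × (ℝ × ℝ) | q.2.1 ≤ q.1 ∧ q.1 < q.2.2} :=
    (measurableSet_le (f := fun q : ℝ × (ℝ × ℝ) => q.2.1) (g := fun q => q.1)
      (by fun_prop) (by fun_prop)).inter
    (measurableSet_lt (f := fun q : ℝ × (ℝ × ℝ) => q.1) (g := fun q => q.2.2)
      (by fun_prop) (by fun_prop))
  have h1 := Measure.prod_apply (μ := (volume : Measure ℝ)) (ν := m.prod m) hS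
  have h2 := Measure.prod_apply_symm (μ := (volume : Measure ℝ)) (ν := m.prod m) hS
  rw [h1] at h2
  convert h2 using 1
  · refine lintegral_congr fun x => ?_
    have hs : Prod.mk x ⁻¹' {q : ℝ × (ℝ × ℝ) | q.2.1 ≤ q.1 ∧ q.1 < q.2.2}
        = Iic x ×ˢ Ioi x := by
      ext p; simp
    have hc : 1 - cdfOf m x = (m (Ioi x)).toReal := by
      have := probReal_compl_eq_one_sub (μ := m) (measurableSet_Iic (a := x))
      rw [compl_Iic] at this
      exact this.symm
    rw [hs, Measure.prod_prod, hc, cdfOf, ENNReal.ofReal_mul ENNReal.toReal_nonneg,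
      ENNReal.ofReal_toReal (measure_ne_top _ _), ENNReal.ofReal_toReal (measure_ne_top _ _)]
  · refine lintegral_congr fun p => ?_
    have hs : (fun x => (x, p)) ⁻¹' {q : ℝ × (ℝ × ℝ) | q.2.1 ≤ q.1 ∧ q.1 < q.2.2}
        = Ico p.1 p.2 := by
      ext x; simp
    rw [hs, Real.volume_Ico]

theorem stmt4 (m : Measure ℝ) [IsProbabilityMeasure m] :
    (∫⁻ x, ENNReal.ofReal |x| ∂m) < ⊤ ↔
      (∫⁻ x, ENNReal.ofReal (cdfOf m x * (1 - cdfOf m x))) < ⊤ := by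
  rw [key_identity]
  constructor
  · intro h
    have hle : ∫⁻ p : ℝ × ℝ, ENNReal.ofReal (p.2 - p.1) ∂(m.prod m) ≤
        ∫⁻ p : ℝ × ℝ, (ENNReal.ofReal |p.1| + ENNReal.ofReal |p.2|) ∂(m.prod m) := by
      refine lintegral_mono fun p => ?_
      rw [← ENNReal.ofReal_add (abs_nonneg _) (abs_nonneg _)]
      apply ENNReal.ofReal_le_ofReal
      linarith [le_abs_self p.2, neg_abs_le p.1]
    refine hle.trans_lt ?_
    rw [lintegral_add_left (by fun_prop), lintegral_prod _ (by fun_prop),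
      lintegral_prod _ (by fun_prop)]
    simpa using h
  · intro h
    have h' := h
    rw [lintegral_prod _ (by fun_prop)] at h
    rw [lintegral_prod_symm _ (by fun_prop)] at h'
    obtain ⟨a, ha⟩ := (ae_lt_top' (by fun_prop) h.ne).exists
    obtain ⟨b, hb⟩ := (ae_lt_top' (by fun_prop) h'.ne).exists
    have hle : ∫⁻ x, ENNReal.ofReal |x| ∂m ≤
        ∫⁻ x, ((ENNReal.ofReal (x - a) + ENNReal.ofReal (b - x)) +
          ENNReal.ofReal (|a| + |b|)) ∂m := by
      refine lintegral_mono fun x => ?_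
      have h1 : |x| ≤ (max (x - a) 0 + max (b - x) 0) + (|a| + |b|) := by
        have := le_max_left (x - a) 0
        have := le_max_right (x - a) 0
        have := le_max_left (b - x) 0
        have := le_max_right (b - x) 0
        have := neg_abs_le a
        have := le_abs_self a
        have := neg_abs_le b
        have := le_abs_self b
        rw [abs_le]
        constructor <;> linarith
      refine (ENNReal.ofReal_le_ofReal h1).trans ?_
      refine ENNReal.ofReal_add_le.trans ?_
      gcongr
      refine ENNReal.ofReal_add_le.trans ?_
      simp [ENNReal.ofReal_max]
    refine hle.trans_lt ?_
    rw [lintegral_add_left (by fun_prop), lintegral_add_left (by fun_prop)]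
    simp only [lintegral_const, measure_univ, mul_one]
    exact ENNReal.add_lt_top.2 ⟨ENNReal.add_lt_top.2 ⟨ha, hb⟩, ENNReal.ofReal_lt_top⟩
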